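/- Tensor QR decomposition for the c-product: every tensor A ∈ ℝ^{n1×n2×n3} can be factored as A = Q ⋆_c R, i.e. there exist Q ∈ ℝ^{n1×n1×n3} with mat(Q) orthogonal (mat(Q)ᵀmat(Q) = I) and R ∈ ℝ^{n1×n2×n3} with every frontal slice R^{(k)} upper triangular, such that mat(A) = mat(Q)·mat(R). -/

import Mathlib

open Matrix BigOperators Kronecker

noncomputable section

/-- The `n × n` discrete cosine transform (DCT) matrix, with 0-based indexing of the 1-based
formula `(C_n)_{ij} = √((2−δ_{i1})/n)·cos((i−1)(2j−1)π/(2n))`. -/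
def dctMatrix (n : ℕ) : Matrix (Fin n) (Fin n) ℝ :=
  Matrix.of fun i j =>
    Real.sqrt ((2 - if (i : ℕ) = 0 then 1 else 0) / n) *
      Real.cos ((i : ℝ) * (2 * (j : ℝ) + 1) * Real.pi / (2 * n))

/-- The `n × n` upshift matrix `Z`, with ones on the first superdiagonal. -/
def upshift (n : ℕ) : Matrix (Fin n) (Fin n) ℝ :=
  Matrix.of fun i j => if (i : ℕ) + 1 = (j : ℕ) then 1 else 0

/-- `W = diag(C_n(:,1))`, the diagonal matrix whose diagonal is the first column of the DCT
matrix. -/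
def Wdiag (n : ℕ) : Matrix (Fin n) (Fin n) ℝ :=
  Matrix.diagonal fun i => dctMatrix n i ⟨0, i.pos⟩

/-- The `n × n` transform matrix `M = W⁻¹ C_n (I + Z)`. -/
def transformM (n : ℕ) : Matrix (Fin n) (Fin n) ℝ :=
  (Wdiag n)⁻¹ * dctMatrix n * (1 + upshift n)

/-- The Hankel part `H_{p,q}` of the `(p,q)` block of `mat(A)` (0-based indices:
the 1-based conditions `p+q ≤ n3`, `p+q = n3+1`, `p+q ≥ n3+2` become
`p+q+1 < n3`, `p+q+1 = n3` and `p+q+1 > n3`, with blocks `A^{(p+q+1)}` resp. `0`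
resp. `A^{(2·n3−(p+q)−1)}` in 0-based numbering of the slices). -/
def hankelPart {n1 n2 n3 : ℕ} (A : Fin n3 → Matrix (Fin n1) (Fin n2) ℝ) (p q : Fin n3) :
    Matrix (Fin n1) (Fin n2) ℝ :=
  if h : p.val + q.val + 1 < n3 then A ⟨p.val + q.val + 1, h⟩
  else if h' : p.val + q.val + 1 = n3 then 0
  else A ⟨2 * n3 - (p.val + q.val) - 1, by
    have hp := p.isLt; have hq := q.isLt; omega⟩

/-- `mat(A)`: the block Toeplitz-plus-Hankel matrix associated with a third-order tensor `A`,
identified with the tuple of its frontal slices.  Rows are indexed by `Fin n3 × Fin n1`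
(block row, row within block) and columns by `Fin n3 × Fin n2`. -/
def tmat {n1 n2 n3 : ℕ} (A : Fin n3 → Matrix (Fin n1) (Fin n2) ℝ) :
    Matrix (Fin n3 × Fin n1) (Fin n3 × Fin n2) ℝ :=
  Matrix.of fun pi qj =>
    (A ⟨Nat.dist pi.1.val qj.1.val, by
        have hp := pi.1.isLt; have hq := qj.1.isLt
        simp only [Nat.dist]; omega⟩ + hankelPart A pi.1 qj.1) pi.2 qj.2

/-- The `p`-th transformed slice `Ã^{(p)} = Σ_q M_{pq} A^{(q)}` of a tensor `A`. -/
def tSlice {n1 n2 n3 : ℕ} (A : Fin n3 → Matrix (Fin n1) (Fin n2) ℝ) (p : Fin n3) :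
    Matrix (Fin n1) (Fin n2) ℝ :=
  ∑ q, transformM n3 p q • A q

/-- Toeplitz-plus-Hankel matrix `th(v)` of a vector `v ∈ ℝⁿ` (0-based indexing of the 1-based
formula of the paper). -/
def thMat {n : ℕ} (v : Fin n → ℝ) : Matrix (Fin n) (Fin n) ℝ :=
  Matrix.of fun p q =>
    v ⟨Nat.dist p.val q.val, by
        have hp := p.isLt; have hq := q.isLt; simp only [Nat.dist]; omega⟩ +
    (if h : p.val + q.val + 1 < n then v ⟨p.val + q.val + 1, h⟩
     else if h' : p.val + q.val + 1 = n then 0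
     else v ⟨2 * n - (p.val + q.val) - 1, by
       have hp := p.isLt; have hq := q.isLt; omega⟩)

/-- The product `a ⊛ B` of a tube `a ∈ ℝ^{1×1×n3}` (identified with a vector of `ℝ^{n3}`) with a
tensor `B`: the tensor whose transformed slices are `(a ⊛ B)~^{(p)} = (M a)_p • B̃^{(p)}`. -/
def tubeSMul {n1 n2 n3 : ℕ} (a : Fin n3 → ℝ) (B : Fin n3 → Matrix (Fin n1) (Fin n2) ℝ) :
    Fin n3 → Matrix (Fin n1) (Fin n2) ℝ :=
  fun t => ∑ p, (transformM n3)⁻¹ t p • ((transformM n3).mulVec a p • tSlice B p)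

/-- The c-product `a ⋆_c b` of two tubes: the tube whose transform is the componentwise product
of the transforms, `M (a ⋆_c b) = (M a) .* (M b)`. -/
def tubeCMul {n3 : ℕ} (a b : Fin n3 → ℝ) : Fin n3 → ℝ :=
  (transformM n3)⁻¹.mulVec fun p => (transformM n3).mulVec a p * (transformM n3).mulVec b p

/-- Frobenius norm of a real matrix. -/
def frobNorm {m n : ℕ} (B : Matrix (Fin m) (Fin n) ℝ) : ℝ :=
  Real.sqrt (∑ i, ∑ j, (B i j) ^ 2)

/-- Frobenius norm of a third-order tensor. -/
def tFrobNorm {n1 n2 n3 : ℕ} (A : Fin n3 → Matrix (Fin n1) (Fin n2) ℝ) : ℝ :=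
  Real.sqrt (∑ k, ∑ i, ∑ j, (A k i j) ^ 2)

/-- The `i`-th lateral slice `U(:,i,:)` of a tensor `U`: the `n1 × 1 × n3` tensor whose `k`-th
frontal slice is the `i`-th column of `U^{(k)}`. -/
def lateralSlice {n1 n2 n3 : ℕ} (U : Fin n3 → Matrix (Fin n1) (Fin n2) ℝ) (i : Fin n2) :
    Fin n3 → Matrix (Fin n1) (Fin 1) ℝ :=
  fun k => Matrix.of fun r _ => U k r i

/-- The `(i,j)` tube `S(i,j,:)` of a tensor `S`: the `1 × 1 × n3` tensor whose `k`-th frontal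
slice is the `(i,j)` entry of `S^{(k)}`. -/
def entryTube {n1 n2 n3 : ℕ} (S : Fin n3 → Matrix (Fin n1) (Fin n2) ℝ) (i : Fin n1) (j : Fin n2) :
    Fin n3 → Matrix (Fin 1) (Fin 1) ℝ :=
  fun k => Matrix.of fun _ _ => S k i j

/-- Slicewise transpose of a tensor. -/
def sTranspose {n1 n2 n3 : ℕ} (A : Fin n3 → Matrix (Fin n1) (Fin n2) ℝ) :
    Fin n3 → Matrix (Fin n2) (Fin n1) ℝ :=
  fun k => (A k)ᵀ

/-- `TVect(A)`: stacking the lateral slices of `A` one below the other; the `k`-th frontal slice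
of `TVect(A)` is obtained by stacking the columns of `A^{(k)}` (entry `r = j·n1 + i` is
`A^{(k)}_{i,j}`). -/
def tvect {n1 n2 n3 : ℕ} (A : Fin n3 → Matrix (Fin n1) (Fin n2) ℝ) :
    Fin n3 → Matrix (Fin (n1 * n2)) (Fin 1) ℝ :=
  fun k => Matrix.of fun r _ =>
    A k ⟨r.val % n1, Nat.mod_lt _ (Nat.pos_of_ne_zero fun h0 => absurd r.isLt (by simp [h0]))⟩
        ⟨r.val / n1, Nat.div_lt_of_lt_mul r.isLt⟩

/-- unnormalised DCT eigenvector entries -/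
def xv (n i q : ℕ) : ℝ := Real.cos ((i : ℝ) * (2 * (q : ℝ) + 1) * Real.pi / (2 * n))

/-- indicator form of the Toeplitz plus Hankel basis -/
def thE (n k p q : ℕ) : ℝ :=
  (if Nat.dist p q = k then 1 else 0) + ((if p + q + 1 = k then 1 else 0) +
    (if p + q + 1 + k = 2 * n then 1 else 0))

lemma sum_ite_val {n : ℕ} (v : Fin n → ℝ) (m : ℕ) :
    ∑ k : Fin n, v k * (if m = (k : ℕ) then 1 else 0) = if h : m < n then v ⟨m, h⟩ else 0 := by
  split_ifs with h
  · rw [Finset.sum_eq_single ⟨m, h⟩]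
    · simp
    · intro b _ hb
      rw [if_neg, mul_zero]
      intro h'
      exact hb (Fin.ext h'.symm)
    · simp
  · apply Finset.sum_eq_zero
    intro k _
    rw [if_neg, mul_zero]
    have := k.isLt
    omega

lemma thMat_eq {n : ℕ} (v : Fin n → ℝ) (p q : Fin n) :
    thMat v p q = ∑ k : Fin n, v k * thE n k p q := by
  have hp := p.isLt
  have hq := q.isLt
  have h1 : Nat.dist p.val q.val < n := by simp only [Nat.dist]; omega
  have h2 : ∀ k : Fin n, (if p.val + q.val + 1 + (k : ℕ) = 2 * n then (1 : ℝ) else 0) =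
      if 2 * n - (p.val + q.val) - 1 = (k : ℕ) then 1 else 0 := by
    intro k
    congr 1
    apply propext
    omega
  simp only [thE, mul_add, Finset.sum_add_distrib, h2, sum_ite_val, dif_pos h1, thMat,
    Matrix.of_apply]
  congr 1
  by_cases ha : p.val + q.val + 1 < n
  · rw [dif_pos ha, dif_pos ha, dif_neg (by omega), add_zero]
  · rw [dif_neg ha, dif_neg ha]
    by_cases hb : p.val + q.val + 1 = n
    · rw [dif_pos hb, dif_neg (by omega), add_zero]
    · rw [dif_neg hb, dif_pos (by omega), zero_add]

lemma thE_symm (n k p q : ℕ) : thE n k p q = thE n k q p := by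
  unfold thE
  rw [Nat.dist_comm, Nat.add_comm p q]

lemma xv_reflect {n : ℕ} (hn : 0 < n) (i a b : ℕ) (h : a + b + 1 = 2 * n) :
    xv n i a = xv n i b := by
  unfold xv
  have hn' : (n : ℝ) ≠ 0 := by positivity
  have ha : (a : ℝ) = 2 * n - b - 1 := by
    have : ((a + b + 1 : ℕ) : ℝ) = ((2 * n : ℕ) : ℝ) := by rw [h]
    push_cast at this
    linarith
  rw [ha, ← Real.cos_nat_mul_two_pi_sub _ i]
  congr 1
  field_simp
  ring

/-- eigenvalues -/
def lamE (n i k : ℕ) : ℝ :=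
  if k = 0 then 1 else 2 * Real.cos ((i : ℝ) * k * Real.pi / n)

lemma eigE {n : ℕ} (i k : ℕ) (hk : k < n) (p : ℕ) (hp : p < n) :
    ∑ q : Fin n, thE n k p q * xv n i q = lamE n i k * xv n i p := by
  have hn : 0 < n := by omega
  have hn' : (n : ℝ) ≠ 0 := by positivity
  by_cases h0 : k = 0
  · subst h0
    rw [Finset.sum_eq_single ⟨p, hp⟩]
    · have : ¬ (p + p + 1 = 2 * n) := by omega
      simp [thE, lamE, Nat.dist, this]
    · intro b _ hb
      have hb' : (b : ℕ) ≠ p := fun h => hb (Fin.ext h)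
      have := b.isLt
      have h1 : ¬ Nat.dist p b = 0 := by simp only [Nat.dist]; omega
      have h2 : ¬ (p + (b : ℕ) + 1 = 2 * n) := by omega
      simp [thE, h1, h2]
    · simp
  · -- two terms
    have hs : ∀ q : Fin n, thE n k p q * xv n i q =
        xv n i q * (if (if p + k < n then p + k else 2 * n - k - p - 1) = (q : ℕ) then 1 else 0) +
        xv n i q * (if (if k ≤ p then p - k else k - p - 1) = (q : ℕ) then 1 else 0) := by
      intro q
      have hq := q.isLt
      rw [← mul_add, mul_comm]
      congr 1
      have hd : Nat.dist p q = p - q + (q - p) := rfl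
      unfold thE
      generalize Nat.dist p q = d at hd ⊢
      by_cases c1 : p + k < n <;> by_cases c2 : k ≤ p <;> simp only [c1, c2, if_true, if_false] <;>
        split_ifs <;> first | omega | norm_num
    simp only [hs]
    rw [Finset.sum_add_distrib, sum_ite_val (fun q : Fin n => xv n i q),
      sum_ite_val (fun q : Fin n => xv n i q)]
    have b1 : (if p + k < n then p + k else 2 * n - k - p - 1) < n := by split_ifs <;> omega
    have b2 : (if k ≤ p then p - k else k - p - 1) < n := by split_ifs <;> omega
    rw [dif_pos b1, dif_pos b2]
    have e1 : xv n i (if p + k < n then p + k else 2 * n - k - p - 1) = 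
        Real.cos ((i : ℝ) * (2 * (p : ℝ) + 1) * Real.pi / (2 * n) + (i : ℝ) * k * Real.pi / n) := by
      have : xv n i (if p + k < n then p + k else 2 * n - k - p - 1) = xv n i (p + k) := by
        split_ifs
        · rfl
        · exact xv_reflect hn _ _ _ (by omega)
      rw [this, xv]
      congr 1
      push_cast
      field_simp
      ring
    have e2 : xv n i (if k ≤ p then p - k else k - p - 1) = 
        Real.cos ((i : ℝ) * (2 * (p : ℝ) + 1) * Real.pi / (2 * n) - (i : ℝ) * k * Real.pi / n) := by
      split_ifs with h
      · rw [xv, Nat.cast_sub h]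
        congr 1
        field_simp
        ring
      · have h3 : ((k - p - 1 : ℕ) : ℝ) = k - p - 1 := by
          rw [Nat.cast_sub (by omega), Nat.cast_sub (by omega)]
          simp
        rw [xv, h3, ← Real.cos_neg]
        congr 1
        field_simp
        ring
    simp only [e1, e2]
    rw [Real.cos_add, Real.cos_sub, lamE, if_neg h0, xv]
    ring

lemma xv_orth {n : ℕ} (i j : Fin n) (hij : i ≠ j) :
    ∑ q : Fin n, xv n i q * xv n j q = 0 := by
  have hi := i.isLt
  have hj := j.isLt
  have hne : (i : ℕ) ≠ j := fun h => hij (Fin.ext h)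
  have h1 : 1 < n := by omega
  have hn : (0 : ℝ) < n := by positivity
  have key : lamE n i 1 * ∑ q : Fin n, xv n i q * xv n j q =
      lamE n j 1 * ∑ q : Fin n, xv n i q * xv n j q := by
    calc lamE n i 1 * ∑ q : Fin n, xv n i q * xv n j q
        = ∑ p : Fin n, ∑ q : Fin n, thE n 1 p q * xv n i q * xv n j p := by
          rw [Finset.mul_sum]
          refine Finset.sum_congr rfl fun p _ => ?_
          rw [← Finset.sum_mul, eigE i 1 h1 p p.isLt]
          ring
      _ = ∑ q : Fin n, ∑ p : Fin n, thE n 1 p q * xv n i q * xv n j p := Finset.sum_comm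
      _ = lamE n j 1 * ∑ q : Fin n, xv n i q * xv n j q := by
          rw [Finset.mul_sum]
          refine Finset.sum_congr rfl fun q _ => ?_
          have := eigE (j : ℕ) 1 h1 q q.isLt
          rw [mul_left_comm, ← this, Finset.mul_sum]
          refine Finset.sum_congr rfl fun p _ => ?_
          rw [thE_symm]
          ring
  by_contra hz
  have h2 := mul_right_cancel₀ hz key
  simp only [lamE, one_ne_zero, if_false] at h2
  have h3 := mul_left_cancel₀ two_ne_zero h2
  have mem : ∀ a : Fin n, (a : ℝ) * ((1 : ℕ) : ℝ) * Real.pi / n ∈ Set.Icc 0 Real.pi := by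
    intro a
    have : (a : ℝ) ≤ n := by exact_mod_cast a.isLt.le
    constructor
    · positivity
    · rw [div_le_iff₀ hn]
      push_cast
      nlinarith [Real.pi_pos]
  have h4 := Real.injOn_cos (mem i) (mem j) h3
  have hpi := Real.pi_ne_zero
  field_simp at h4
  apply hne
  exact_mod_cast h4

lemma xv_pos {n : ℕ} (i : Fin n) : 0 < ∑ q : Fin n, xv n i q * xv n i q := by
  have hn : 0 < n := i.pos
  have hn' : (0 : ℝ) < n := by positivity
  apply Finset.sum_pos' (fun q _ => mul_self_nonneg _)
  refine ⟨⟨0, hn⟩, Finset.mem_univ _, ?_⟩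
  have hin : (i : ℝ) < n := by exact_mod_cast i.isLt
  have : 0 < xv n i 0 := by
    apply Real.cos_pos_of_mem_Ioo
    constructor
    · have : 0 ≤ (i : ℝ) * (2 * ((0 : ℕ) : ℝ) + 1) * Real.pi / (2 * n) := by positivity
      linarith [Real.pi_pos]
    · rw [div_lt_iff₀ (by positivity)]
      push_cast
      nlinarith [Real.pi_pos]
  exact mul_pos this this

/-- normalised rows -/
def cv (n : ℕ) : Matrix (Fin n) (Fin n) ℝ :=
  Matrix.of fun s q => xv n s q / Real.sqrt (∑ q : Fin n, xv n s q * xv n s q)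

lemma cv_mul (n : ℕ) : cv n * (cv n)ᵀ = 1 := by
  ext i j
  rw [Matrix.mul_apply]
  simp only [cv, Matrix.transpose_apply, Matrix.of_apply, div_mul_div_comm]
  rw [← Finset.sum_div]
  by_cases h : i = j
  · subst h
    have := xv_pos i
    rw [Real.mul_self_sqrt this.le, Matrix.one_apply_eq, div_self this.ne']
  · rw [xv_orth i j h, zero_div, Matrix.one_apply_ne h]

lemma cv_mul' (n : ℕ) : (cv n)ᵀ * cv n = 1 := mul_eq_one_comm.mp (cv_mul n)

/-- the eigenvalue map -/
def lam (n : ℕ) : (Fin n → ℝ) →ₗ[ℝ] (Fin n → ℝ) :=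
  Matrix.toLin' (Matrix.of fun s k : Fin n => lamE n s k)

lemma lam_apply {n : ℕ} (v : Fin n → ℝ) (s : Fin n) :
    lam n v s = ∑ k : Fin n, lamE n s k * v k := by
  simp [lam, Matrix.mulVec, dotProduct]

lemma thMat_mul {n : ℕ} (v : Fin n → ℝ) :
    thMat v * (cv n)ᵀ = (cv n)ᵀ * Matrix.diagonal (lam n v) := by
  ext p s
  rw [Matrix.mul_apply, Matrix.mul_diagonal]
  simp only [Matrix.transpose_apply, cv, Matrix.of_apply, thMat_eq, lam_apply]
  simp only [← mul_div_assoc]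
  rw [← Finset.sum_div, div_mul_eq_mul_div]
  congr 1
  simp only [Finset.sum_mul, Finset.mul_sum]
  rw [Finset.sum_comm]
  refine Finset.sum_congr rfl fun k _ => ?_
  have := eigE (s : ℕ) k k.isLt p p.isLt
  simp only [mul_assoc]
  rw [← Finset.mul_sum, this]
  ring

lemma thMat_decomp {n : ℕ} (v : Fin n → ℝ) (p q : Fin n) :
    thMat v p q = ∑ s, cv n s p * lam n v s * cv n s q := by
  have : thMat v = (cv n)ᵀ * Matrix.diagonal (lam n v) * cv n := by
    rw [← thMat_mul, Matrix.mul_assoc, cv_mul', Matrix.mul_one]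
  rw [this, Matrix.mul_apply]
  simp [Matrix.mul_diagonal]

lemma lam_inj (n : ℕ) : Function.Injective (lam n) := by
  rw [← LinearMap.ker_eq_bot, LinearMap.ker_eq_bot']
  intro v hv
  have hz : ∀ p q, thMat v p q = 0 := by
    intro p q
    rw [thMat_decomp, hv]
    simp
  have : ∀ d : ℕ, ∀ p : Fin n, (p : ℕ) + d + 1 = n → v p = 0 := by
    intro d
    induction d with
    | zero =>
      intro p hp
      have h := hz p ⟨0, p.pos⟩
      simp only [thMat, Matrix.of_apply] at h
      rw [dif_neg (by simp; omega), dif_pos (by simp; omega)] at h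
      simpa [Nat.dist] using h
    | succ d ih =>
      intro p hp
      have h := hz p ⟨0, p.pos⟩
      simp only [thMat, Matrix.of_apply] at h
      rw [dif_pos (by simp; omega), ih ⟨(p : ℕ) + 0 + 1, by omega⟩ (by simp; omega)] at h
      simpa [Nat.dist] using h
  ext p
  exact this (n - 1 - p) p (by have := p.isLt; omega)

lemma lam_surj (n : ℕ) : Function.Surjective (lam n) :=
  LinearMap.injective_iff_surjective.mp (lam_inj n)

lemma tmat_eq {n1 n2 n3 : ℕ} (A : Fin n3 → Matrix (Fin n1) (Fin n2) ℝ) (p q : Fin n3)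
    (i : Fin n1) (j : Fin n2) : tmat A (p, i) (q, j) = thMat (fun k => A k i j) p q := by
  simp only [tmat, thMat, hankelPart, Matrix.of_apply, Matrix.add_apply]
  congr 1
  split_ifs <;> rfl

/-- transformed slices -/
def hatS {n1 n2 n3 : ℕ} (A : Fin n3 → Matrix (Fin n1) (Fin n2) ℝ) (s : Fin n3) :
    Matrix (Fin n1) (Fin n2) ℝ := Matrix.of fun i j => lam n3 (fun k => A k i j) s

lemma hatS_surj {n1 n2 n3 : ℕ} (B : Fin n3 → Matrix (Fin n1) (Fin n2) ℝ) :
    ∃ A, hatS A = B := by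
  choose f hf using fun (i : Fin n1) (j : Fin n2) => lam_surj n3 (fun s => B s i j)
  refine ⟨fun k => Matrix.of fun i j => f i j k, ?_⟩
  ext s i j
  exact congrFun (hf i j) s

/-- block diagonal reassembly -/
def asm {n1 n2 n3 : ℕ} (B : Fin n3 → Matrix (Fin n1) (Fin n2) ℝ) :
    Matrix (Fin n3 × Fin n1) (Fin n3 × Fin n2) ℝ :=
  Matrix.of fun x y => ∑ s, cv n3 s x.1 * B s x.2 y.2 * cv n3 s y.1

lemma tmat_asm {n1 n2 n3 : ℕ} (A : Fin n3 → Matrix (Fin n1) (Fin n2) ℝ) :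
    tmat A = asm (hatS A) := by
  ext ⟨p, i⟩ ⟨q, j⟩
  rw [tmat_eq, thMat_decomp]
  rfl

lemma cv_rows {n : ℕ} (s t : Fin n) : ∑ r, cv n s r * cv n t r = if s = t then 1 else 0 := by
  have := congrFun (congrFun (cv_mul n) s) t
  rwa [Matrix.mul_apply, Matrix.one_apply] at this

lemma asm_mul {n1 n2 n3 m : ℕ} (B : Fin n3 → Matrix (Fin n1) (Fin m) ℝ)
    (D : Fin n3 → Matrix (Fin m) (Fin n2) ℝ) :
    asm B * asm D = asm (fun s => B s * D s) := by
  ext ⟨p, i⟩ ⟨q, j⟩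
  rw [Matrix.mul_apply, Fintype.sum_prod_type, Finset.sum_comm]
  simp only [asm, Matrix.of_apply, Matrix.mul_apply, Finset.mul_sum, Finset.sum_mul]
  rw [Finset.sum_comm (s := Finset.univ (α := Fin n3)) (t := Finset.univ (α := Fin m))]
  refine Finset.sum_congr rfl fun k _ => ?_
  calc _ = ∑ t, ∑ s, cv n3 s p * B s i k * (D t k j * cv n3 t q) *
        ∑ r, cv n3 s r * cv n3 t r := by
        rw [Finset.sum_comm]
        refine Finset.sum_congr rfl fun t _ => ?_
        rw [Finset.sum_comm]
        refine Finset.sum_congr rfl fun s _ => ?_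
        rw [Finset.mul_sum]
        refine Finset.sum_congr rfl fun r _ => ?_
        ring
    _ = _ := by
        simp only [cv_rows, mul_ite, mul_one, mul_zero, Finset.sum_ite_eq', Finset.mem_univ,
          if_true]
        refine Finset.sum_congr rfl fun k _ => ?_
        ring

lemma asm_transpose {n1 n2 n3 : ℕ} (B : Fin n3 → Matrix (Fin n1) (Fin n2) ℝ) :
    (asm B)ᵀ = asm (fun s => (B s)ᵀ) := by
  ext ⟨p, i⟩ ⟨q, j⟩
  simp only [asm, Matrix.of_apply, Matrix.transpose_apply]
  refine Finset.sum_congr rfl fun k _ => ?_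
  ring

lemma asm_one {n1 n3 : ℕ} :
    asm (fun _ : Fin n3 => (1 : Matrix (Fin n1) (Fin n1) ℝ)) = 1 := by
  ext ⟨p, i⟩ ⟨q, j⟩
  have := congrFun (congrFun (cv_mul' n3) p) q
  rw [Matrix.mul_apply, Matrix.one_apply] at this
  simp only [Matrix.transpose_apply] at this
  simp only [asm, Matrix.of_apply, Matrix.one_apply, Prod.mk.injEq]
  by_cases h : i = j
  · simp [h, this]
  · simp [h]

lemma real_qr {n1 n2 : ℕ} (M : Matrix (Fin n1) (Fin n2) ℝ) :
    ∃ (Q : Matrix (Fin n1) (Fin n1) ℝ) (R : Matrix (Fin n1) (Fin n2) ℝ), Qᵀ * Q = 1 ∧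
      (∀ (i : Fin n1) (j : Fin n2), (j : ℕ) < (i : ℕ) → R i j = 0) ∧ M = Q * R := by
  let f : Fin n1 → EuclideanSpace ℝ (Fin n1) := fun j =>
    if h : (j : ℕ) < n2 then WithLp.toLp 2 (fun i => M i ⟨j, h⟩) else 0
  let b := InnerProductSpace.gramSchmidtOrthonormalBasis (𝕜 := ℝ)
    (finrank_euclideanSpace (𝕜 := ℝ) (ι := Fin n1)) f
  let Q : Matrix (Fin n1) (Fin n1) ℝ := Matrix.of fun i k => b k i
  have hQ : Qᵀ * Q = 1 := by
    ext i j
    have := orthonormal_iff_ite.mp b.orthonormal i j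
    rw [PiLp.inner_apply] at this
    rw [Matrix.mul_apply, Matrix.one_apply, ← this]
    refine Finset.sum_congr rfl fun k _ => ?_
    simp [Q, mul_comm]
  refine ⟨Q, Qᵀ * M, hQ, ?_, ?_⟩
  · intro i j hij
    have hj : (j : ℕ) < n1 := hij.trans i.isLt
    have := InnerProductSpace.gramSchmidtOrthonormalBasis_inv_triangular (𝕜 := ℝ)
      (finrank_euclideanSpace (𝕜 := ℝ) (ι := Fin n1)) f (i := ⟨j, hj⟩) (j := i) hij
    rw [PiLp.inner_apply] at this
    rw [Matrix.mul_apply, ← this]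
    refine Finset.sum_congr rfl fun k _ => ?_
    simp [Q, f, b, mul_comm]
  · rw [← Matrix.mul_assoc, mul_eq_one_comm.mp hQ, Matrix.one_mul]

/-- tensor QR for the c-product: every `A ∈ ℝ^{n1×n2×n3}` factors as
`A = Q ⋆_c R` with `mat(Q)` orthogonal and every frontal slice of `R` upper triangular. -/
theorem c_qr {n1 n2 n3 : ℕ} (A : Fin n3 → Matrix (Fin n1) (Fin n2) ℝ) :
    ∃ (Q : Fin n3 → Matrix (Fin n1) (Fin n1) ℝ)
      (R : Fin n3 → Matrix (Fin n1) (Fin n2) ℝ),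
      (tmat Q)ᵀ * tmat Q = 1 ∧
      (∀ k, ∀ (i : Fin n1) (j : Fin n2), (j : ℕ) < (i : ℕ) → R k i j = 0) ∧
      tmat A = tmat Q * tmat R := by
  choose Q' R' hQ hR hM using fun s => real_qr (hatS A s)
  obtain ⟨Q, rfl⟩ := hatS_surj Q'
  obtain ⟨R, rfl⟩ := hatS_surj R'
  refine ⟨Q, R, ?_, ?_, ?_⟩
  · rw [tmat_asm, asm_transpose, asm_mul]
    simp only [hQ]
    exact asm_one
  · intro k i j hij
    have h : lam n3 (fun k => R k i j) = lam n3 0 := by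
      ext s
      rw [map_zero]
      exact hR s i j hij
    exact congrFun (lam_inj n3 h) k
  · rw [tmat_asm, tmat_asm Q, tmat_asm R, asm_mul]
    congr 1
    funext s
    exact hM s

end
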